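/- arXiv:2502.11016 — 2 statements merged into one kernel-verified Lean document; each statement's English description precedes it below -/
import Mathlib

section
/- Consider the autonomous model (2) with kernels satisfying ∑_{l=0}^∞ |ζ_{ijl}| = 1 for all i,j, and suppose x* ∈ ℝⁿ is an equilibrium point, i.e. x*_i = a_i x*_i + ∑_{j=1}^n ∑_{p=1}^P b_{ijp} f_{ijp}(x*_j) + ∑_{j=1}^n c_{ij} ∑_{l=0}^∞ ζ_{ijl} g_{ij}(x*_j) + I_i for every i. Assume (H6†): for each i,j,p there exist constants F_{ijp}, G_{ij} > 0 such that |f_{ijp}(u) − f_{ijp}(v)| < F_{ijp}|u − v| and |g_{ij}(u) − g_{ij}(v)| < G_{ij}|u − v| for all u ≠ v. If the matrix M is a singular irreducible M-matrix, then every solution x : ℤ → ℝⁿ of model (2) with initial time σ ∈ ℕ and bounded initial condition satisfies |x(m) − x*| → 0 as m → ∞. (Corollary 3.2.) -/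
/-!
The deviation `x m - xstar` is measured in a weighted max norm adapted to the matrix `M` (called
`A` in the proofs).

*Weights.* A matrix with nonpositive off-diagonal entries, nonnegative principal minors and no
reducing index set has a vector `d > 0` with `A d ≥ 0` (`IsMMatrix.exists_pos_mulVec_nonneg`).
Indeed `det (1 + s A) > 0` for `s ≥ 0`, so `adj (1 + s A) 1` can be followed continuously from
`s = 0` without leaving the positive orthant; the normalized vectors accumulate as `s → ∞` at a
vector `d ≥ 0` with `A d ≥ 0`, and irreducibility excludes zero entries.

*Boundedness.* `A d ≥ 0` says that the model is nonexpansive for the weights `d`: each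
`|x (m + 1) i - xstar i| / d i` is at most a subconvex combination of past weighted deviations.

*Convergence.* Let `L` be the infimum of all asymptotic bounds for the weighted deviations. If
`L > 0`, compactness turns the strict inequalities for `f` and `g` into a uniform loss, so every
row improves `L` to a strictly smaller asymptotic bound (`row_improve`), a contradiction. The
infinite delays do no harm because the remote past carries a vanishing share of the summable
kernel (`eventually_tsum_kernel_le`).
-/

/-- A real square matrix with non-positive off-diagonal entries is an `M`-matrix
if all its principal minors are nonnegative. -/
def IsMMatrix {n : ℕ} (A : Matrix (Fin n) (Fin n) ℝ) : Prop :=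
  (∀ i j, i ≠ j → A i j ≤ 0) ∧
  ∀ s : Finset (Fin n),
    0 ≤ (A.submatrix (fun i : s => (i : Fin n)) (fun j : s => (j : Fin n))).det

/-- A real square matrix is reducible if `n = 1` and `A = 0`, or if some simultaneous
permutation of rows and columns puts it in block lower triangular form; equivalently,
there is a nonempty proper subset `S` of indices with `A i j = 0` whenever
`i ∈ S` and `j ∉ S`. -/
def IsReducible {n : ℕ} (A : Matrix (Fin n) (Fin n) ℝ) : Prop :=
  (n = 1 ∧ A = 0) ∨
  ∃ S : Finset (Fin n), S.Nonempty ∧ S ≠ Finset.univ ∧ ∀ i ∈ S, ∀ j ∉ S, A i j = 0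


/-! ### Positive weights for irreducible M-matrices -/

/-- Expanding `det (1 + s A)` in principal minors gives a polynomial in `s` with nonnegative
coefficients and constant term `1`. -/
lemma IsMMatrix.det_one_add_smul_pos {n : ℕ} {A : Matrix (Fin n) (Fin n) ℝ} (hA : IsMMatrix A)
    {s : ℝ} (hs : 0 ≤ s) : 0 < (1 + s • A).det := by
  set q : Polynomial ℝ := Matrix.det (1 + (Polynomial.X : Polynomial ℝ) • A.map Polynomial.C)
    with hq
  have heval : ∀ t : ℝ, q.eval t = (1 + t • A).det := fun t => by
    rw [hq, ← Polynomial.coe_evalRingHom, RingHom.map_det]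
    congr 1
    ext i j
    by_cases hij : i = j <;> simp [hij, mul_comm t]
  have hcoeff : ∀ k, 0 ≤ q.coeff k := fun k => by
    rw [hq, Matrix.coeff_det_one_add_X_smul_eq_sum_minors]
    exact Finset.sum_nonneg fun t _ => hA.2 t
  have h0 : q.coeff 0 = 1 := by
    rw [Polynomial.coeff_zero_eq_eval_zero, heval]; simp
  rw [← heval, Polynomial.eval_eq_sum_range, Finset.sum_range_succ']
  have : 0 ≤ ∑ k ∈ Finset.range q.natDegree, q.coeff (k + 1) * s ^ (k + 1) :=
    Finset.sum_nonneg fun k _ => mul_nonneg (hcoeff _) (pow_nonneg hs _)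
  simp only [h0, pow_zero, mul_one]
  linarith

/-- Along `s ≥ 0` the vector `d_s = adj (1 + s A) 1` starts at `d_0 = 1 > 0` and solves
`(1 + s A) d_s = det (1 + s A) • 1 > 0`. The sign pattern of `A` prevents `min d_s` from
vanishing, so `d_s` stays positive. -/
lemma IsMMatrix.exists_pos_one_add_smul {n : ℕ} (hn : 1 ≤ n) {A : Matrix (Fin n) (Fin n) ℝ}
    (hA : IsMMatrix A) {s : ℝ} (hs : 0 ≤ s) :
    ∃ d : Fin n → ℝ, (∀ i, 0 < d i) ∧ ∀ i, 0 < ((1 + s • A).mulVec d) i := by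
  have : NeZero n := ⟨by omega⟩
  set D : ℝ → Fin n → ℝ := fun t => (1 + t • A).adjugate.mulVec 1 with hD
  have hAD : ∀ t i, ((1 + t • A).mulVec (D t)) i = (1 + t • A).det := fun t i => by
    simp [hD, Matrix.mulVec_mulVec, Matrix.mul_adjugate, Matrix.smul_mulVec]
  have hDc : Continuous D := by
    apply Continuous.matrix_mulVec _ continuous_const
    apply Continuous.matrix_adjugate
    fun_prop
  set φ : ℝ → ℝ := fun t => Finset.univ.inf' Finset.univ_nonempty (D t) with hφ
  have hφc : Continuous φ := by
    apply Continuous.finset_inf'_apply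
    intro i _
    exact (continuous_apply i).comp hDc
  have hφ0 : 0 < φ 0 := by
    simp [hφ, hD, Matrix.adjugate_one]
  have hne : ∀ t, 0 ≤ t → φ t ≠ 0 := by
    intro t ht h
    obtain ⟨i, -, hi⟩ := Finset.exists_mem_eq_inf' (Finset.univ_nonempty) (D t)
    have hDi : D t i = 0 := by rw [← hi]; exact h
    have hDnn : ∀ j, 0 ≤ D t j := fun j => by
      rw [← h]; exact Finset.inf'_le _ (Finset.mem_univ j)
    have h1 := hA.det_one_add_smul_pos ht
    rw [← hAD t i] at h1
    refine absurd h1 (not_lt.2 ?_)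
    simp only [Matrix.mulVec, dotProduct]
    refine Finset.sum_nonpos fun j _ => ?_
    by_cases hij : i = j
    · subst hij; simp [hDi]
    · have := mul_nonneg (mul_nonneg ht (neg_nonneg.2 (hA.1 i j hij))) (hDnn j)
      simp [hij]
      linarith
  refine ⟨D s, ?_, fun i => (hAD s i) ▸ hA.det_one_add_smul_pos hs⟩
  have hpos : 0 < φ s := by
    by_contra hcon
    obtain ⟨t, ht, ht0⟩ := intermediate_value_Icc' hs hφc.continuousOn
      ⟨not_lt.1 hcon, hφ0.le⟩
    exact hne t ht.1 ht0
  exact fun i => hpos.trans_le (Finset.inf'_le _ (Finset.mem_univ i))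

open Filter Topology in
/-- Normalized positive vectors `d_s` with `(1 + s A) d_s > 0` accumulate, as `s → ∞`, at some
`d ≥ 0`, `d ≠ 0` with `A d ≥ 0`; a zero set of `d` would make `A` reducible. -/
lemma IsMMatrix.exists_pos_mulVec_nonneg {n : ℕ} (hn : 1 ≤ n) {A : Matrix (Fin n) (Fin n) ℝ}
    (hA : IsMMatrix A) (hirr : ¬ IsReducible A) :
    ∃ d : Fin n → ℝ, (∀ i, 0 < d i) ∧ ∀ i, 0 ≤ (A.mulVec d) i := by
  have : NeZero n := ⟨by omega⟩
  have key : ∀ k : ℕ, ∃ d ∈ stdSimplex ℝ (Fin n),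
      ∀ i, 0 ≤ (1 / ((k : ℝ) + 1)) * d i + (A.mulVec d) i := by
    intro k
    have hk : (0 : ℝ) < (k : ℝ) + 1 := by positivity
    obtain ⟨d, hd, hd'⟩ := hA.exists_pos_one_add_smul hn hk.le
    have hS : 0 < ∑ i, d i := Finset.sum_pos (fun i _ => hd i) Finset.univ_nonempty
    refine ⟨(∑ i, d i)⁻¹ • d, ⟨fun i => ?_, ?_⟩, fun i => ?_⟩
    · exact mul_nonneg (inv_nonneg.2 hS.le) (hd i).le
    · simp only [Pi.smul_apply, smul_eq_mul, ← Finset.mul_sum]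
      exact inv_mul_cancel₀ hS.ne'
    · have h := hd' i
      simp only [Matrix.add_mulVec, Matrix.one_mulVec, Matrix.smul_mulVec, Pi.add_apply,
        Pi.smul_apply, smul_eq_mul] at h
      have : (1 / ((k : ℝ) + 1)) * ((∑ i, d i)⁻¹ • d) i + (A.mulVec ((∑ i, d i)⁻¹ • d)) i
          = (∑ i, d i)⁻¹ * (1 / ((k : ℝ) + 1)) * (d i + ((k : ℝ) + 1) * (A.mulVec d) i) := by
        simp only [Matrix.mulVec_smul, Pi.smul_apply, smul_eq_mul]
        field_simp
      rw [this]
      positivity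
  choose u hu hu' using key
  obtain ⟨d, hd, ψ, hψ, hlim⟩ := (isCompact_stdSimplex ℝ (Fin n)).tendsto_subseq hu
  have hAd : ∀ i, 0 ≤ (A.mulVec d) i := by
    intro i
    have h1 : Tendsto (fun k => (1 / ((ψ k : ℝ) + 1)) * u (ψ k) i + (A.mulVec (u (ψ k))) i)
        atTop (𝓝 (0 * d i + (A.mulVec d) i)) := by
      have hi : Tendsto (fun k => u (ψ k) i) atTop (𝓝 (d i)) :=
        ((continuous_apply i).tendsto d).comp hlim
      have hAi : Tendsto (fun k => (A.mulVec (u (ψ k))) i) atTop (𝓝 ((A.mulVec d) i)) := by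
        have hc : Continuous fun v : Fin n → ℝ => (A.mulVec v) i :=
          (continuous_apply i).comp (continuous_const.matrix_mulVec continuous_id)
        exact (hc.tendsto d).comp hlim
      exact ((tendsto_one_div_add_atTop_nhds_zero_nat.comp hψ.tendsto_atTop).mul hi).add hAi
    have h2 := ge_of_tendsto' h1 fun k => hu' (ψ k) i
    simpa using h2
  refine ⟨d, fun i => ?_, hAd⟩
  by_contra hi
  have hi0 : d i = 0 := le_antisymm (not_lt.1 hi) (hd.1 i)
  refine hirr (Or.inr ⟨Finset.univ.filter fun j => d j = 0, ⟨i, by simpa using hi0⟩, ?_, ?_⟩)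
  · intro huniv
    have : ∀ j, d j = 0 := fun j => by
      have := huniv ▸ Finset.mem_univ j
      simpa using this
    have h1 := hd.2
    simp [this] at h1
  · intro k hk j hj
    simp only [Finset.mem_filter, Finset.mem_univ, true_and] at hk hj
    have hterm : ∀ l ∈ Finset.univ, A k l * d l ≤ 0 := fun l _ => by
      by_cases hkl : k = l
      · subst hkl; simp [hk]
      · exact mul_nonpos_of_nonpos_of_nonneg (hA.1 k l hkl) (hd.1 l)
    have hsum : ∑ l, A k l * d l = 0 :=
      le_antisymm (Finset.sum_nonpos hterm) (hAd k)
    have := (Finset.sum_eq_zero_iff_of_nonpos hterm).1 hsum j (Finset.mem_univ j)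
    exact (mul_eq_zero.1 this).resolve_right hj

/-! ### Strict Lipschitz functions and infinite-delay averages -/

lemma abs_sub_le_of_strict {φ : ℝ → ℝ} {F : ℝ}
    (h : ∀ u v : ℝ, u ≠ v → |φ u - φ v| < F * |u - v|) (u v : ℝ) :
    |φ u - φ v| ≤ F * |u - v| := by
  rcases eq_or_ne u v with rfl | huv
  · simp
  · exact (h u v huv).le

/-- By compactness of `[e - ρ, e + ρ]`, a strict pointwise Lipschitz inequality leaves a uniform
gap below `F ρ`, even on a slightly larger interval. -/
lemma exists_uniform_gap {φ : ℝ → ℝ} {F : ℝ} (hF : 0 < F)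
    (h : ∀ u v : ℝ, u ≠ v → |φ u - φ v| < F * |u - v|) (e : ℝ) {ρ : ℝ} (hρ : 0 < ρ) :
    ∃ δ > 0, ∀ u, |u - e| ≤ ρ + δ → |φ u - φ e| ≤ F * ρ - δ := by
  have hlip := abs_sub_le_of_strict h
  have hc : Continuous φ := by
    have : LipschitzWith ⟨F, hF.le⟩ φ := LipschitzWith.of_dist_le_mul fun u v => by
      rw [Real.dist_eq, Real.dist_eq]
      exact hlip u v
    exact this.continuous
  obtain ⟨w, hw, hmax⟩ := (isCompact_Icc (a := e - ρ) (b := e + ρ)).exists_isMaxOn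
    ⟨e, by constructor <;> linarith⟩
    (f := fun u => |φ u - φ e|) (by fun_prop)
  have hlt : |φ w - φ e| < F * ρ := by
    rcases eq_or_ne w e with rfl | hwe
    · simpa using mul_pos hF hρ
    · refine (h w e hwe).trans_le (mul_le_mul_of_nonneg_left ?_ hF.le)
      rw [abs_le]; constructor <;> linarith [hw.1, hw.2]
  set η := F * ρ - |φ w - φ e| with hη
  have hη0 : 0 < η := by linarith
  have hδ : η / (F + 1) * (F + 1) = η := by field_simp
  refine ⟨η / (F + 1), by positivity, fun u hu => ?_⟩
  set δ := η / (F + 1)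
  have hδ0 : 0 < δ := by positivity
  -- The nearest point to `u` in `[e - ρ, e + ρ]`.
  obtain ⟨v, hv, huv⟩ : ∃ v ∈ Set.Icc (e - ρ) (e + ρ), |u - v| ≤ δ := by
    rw [abs_le] at hu
    rcases le_total u (e - ρ) with h1 | h1
    · exact ⟨e - ρ, ⟨le_rfl, by linarith⟩, by rw [abs_le]; constructor <;> linarith⟩
    rcases le_total u (e + ρ) with h2 | h2
    · exact ⟨u, ⟨h1, h2⟩, by simpa using hδ0.le⟩
    · exact ⟨e + ρ, ⟨by linarith, le_rfl⟩, by rw [abs_le]; constructor <;> linarith⟩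
  have h1 : |φ v - φ e| ≤ |φ w - φ e| := hmax hv
  have h2 : |φ u - φ v| ≤ F * δ := (hlip u v).trans (mul_le_mul_of_nonneg_left huv hF.le)
  have h3 := abs_sub_le (φ u) (φ v) (φ e)
  linarith

lemma summable_abs_of_tsum_eq_one {ζ : ℕ → ℝ} (h : ∑' l, |ζ l| = 1) :
    Summable fun l => |ζ l| := by
  by_contra hn
  rw [tsum_eq_zero_of_not_summable hn] at h
  exact zero_ne_one h

lemma tsum_kernel_le {ζ w : ℕ → ℝ} (hζ : ∑' l, |ζ l| = 1) {R : ℝ} (hR : ∀ l, |w l| ≤ R) :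
    ∑' l, |ζ l| * |w l| ≤ R := by
  have hs := summable_abs_of_tsum_eq_one hζ
  have hle : ∀ l, |ζ l| * |w l| ≤ |ζ l| * R := fun l =>
    mul_le_mul_of_nonneg_left (hR l) (abs_nonneg _)
  calc ∑' l, |ζ l| * |w l| ≤ ∑' l, |ζ l| * R :=
        (Summable.of_nonneg_of_le (fun l => by positivity) hle (hs.mul_right R)).tsum_le_tsum
          hle (hs.mul_right R)
    _ = R := by rw [tsum_mul_right, hζ, one_mul]

open Filter Topology in
/-- An infinite-delay average with a normalized kernel of a bounded sequence does not exceed the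
eventual bound of the sequence in the limit: the excess over that bound is transported into the
tail of the kernel and vanishes by dominated convergence. -/
lemma eventually_tsum_kernel_le {ζ : ℕ → ℝ} (hζ : ∑' l, |ζ l| = 1) {w : ℤ → ℝ} {C R : ℝ}
    (hC : ∀ m, |w m| ≤ C) (hR : ∀ᶠ m in atTop, |w m| ≤ R) {ε : ℝ} (hε : 0 < ε) :
    ∀ᶠ m : ℤ in atTop, ∑' l : ℕ, |ζ l| * |w (m - l)| ≤ R + ε := by
  have hs := summable_abs_of_tsum_eq_one hζ
  have hbd : ∀ (m : ℤ) (l : ℕ), ‖|ζ l| * max (|w (m - l)| - R) 0‖ ≤ |ζ l| * (|C| + |R|) := by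
    intro m l
    rw [Real.norm_eq_abs, abs_of_nonneg (by positivity)]
    refine mul_le_mul_of_nonneg_left (max_le ?_ (by positivity)) (abs_nonneg _)
    linarith [hC (m - l), le_abs_self C, neg_abs_le R]
  have hlim : Tendsto (fun m : ℤ => ∑' l : ℕ, |ζ l| * max (|w (m - l)| - R) 0) atTop
      (𝓝 (∑' _ : ℕ, (0 : ℝ))) := by
    refine tendsto_tsum_of_dominated_convergence (hs.mul_right (|C| + |R|)) (fun l => ?_)
      (Eventually.of_forall hbd)
    have hsh : Tendsto (fun m : ℤ => m - l) atTop atTop :=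
      tendsto_atTop_add_const_right atTop (-(l : ℤ)) tendsto_id
    refine tendsto_const_nhds.congr' ?_
    filter_upwards [hsh.eventually hR] with m hm
    rw [max_eq_right (by linarith), mul_zero]
  rw [tsum_zero] at hlim
  filter_upwards [hlim.eventually (gt_mem_nhds hε)] with m hm
  have hse : Summable fun l : ℕ => |ζ l| * max (|w (m - l)| - R) 0 :=
    (hs.mul_right (|C| + |R|)).of_norm_bounded (hbd m)
  have hle : ∀ l : ℕ, |ζ l| * |w (m - l)| ≤ |ζ l| * R + |ζ l| * max (|w (m - l)| - R) 0 :=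
    fun l => by
      rw [← mul_add]
      exact mul_le_mul_of_nonneg_left
        (by linarith [le_max_left (|w (m - l)| - R) 0]) (abs_nonneg _)
  have hsum := (hs.mul_right R).add hse
  calc ∑' l : ℕ, |ζ l| * |w (m - l)|
      ≤ ∑' l : ℕ, (|ζ l| * R + |ζ l| * max (|w (m - l)| - R) 0) :=
        (Summable.of_nonneg_of_le (fun l => by positivity) hle hsum).tsum_le_tsum hle hsum
    _ = R + ∑' l : ℕ, |ζ l| * max (|w (m - l)| - R) 0 := by
        rw [(hs.mul_right R).tsum_add hse, tsum_mul_right, hζ, one_mul]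
    _ ≤ R + ε := by linarith

/-! ### Shrinking asymptotic bounds -/

open Filter Topology in
/-- If every positive asymptotic weighted bound can be strictly improved in each coordinate, the
infimum of all such bounds is zero. -/
lemma tendsto_zero_of_improve {n : ℕ} (hn : 1 ≤ n) {d : Fin n → ℝ} (hd : ∀ i, 0 < d i)
    {y : ℤ → Fin n → ℝ} {K : ℝ} (hK : ∀ m j, |y m j| ≤ K * d j)
    (himp : ∀ L > 0, (∀ L' > L, ∀ j, ∀ᶠ m in atTop, |y m j| ≤ L' * d j) →
      ∀ i, ∃ θ < L, ∀ᶠ m in atTop, |y m i| ≤ θ * d i) :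
    Tendsto y atTop (𝓝 0) := by
  have : NeZero n := ⟨by omega⟩
  set S : Set ℝ := {L | 0 ≤ L ∧ ∀ j, ∀ᶠ m in atTop, |y m j| ≤ L * d j} with hS
  have hbdd : BddBelow S := ⟨0, fun L hL => hL.1⟩
  have hne : S.Nonempty := by
    refine ⟨K, ?_, fun j => Eventually.of_forall fun m => hK m j⟩
    exact nonneg_of_mul_nonneg_left ((abs_nonneg _).trans (hK 0 0)) (hd 0)
  have hL0 : 0 ≤ sInf S := le_csInf hne fun L hL => hL.1
  have happ : ∀ L' > sInf S, ∀ j, ∀ᶠ m in atTop, |y m j| ≤ L' * d j := by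
    intro L' hL' j
    obtain ⟨L, hL, hLL'⟩ := exists_lt_of_csInf_lt hne hL'
    filter_upwards [hL.2 j] with m hm
    exact hm.trans (mul_le_mul_of_nonneg_right hLL'.le (hd j).le)
  have hzero : sInf S = 0 := by
    by_contra hcon
    have hpos : 0 < sInf S := lt_of_le_of_ne hL0 (Ne.symm hcon)
    choose θ hθ hθ' using himp _ hpos happ
    set T := max (Finset.univ.sup' Finset.univ_nonempty θ) 0
    have hT : T ∈ S := by
      refine ⟨le_max_right _ _, fun j => ?_⟩
      filter_upwards [hθ' j] with m hm
      refine hm.trans (mul_le_mul_of_nonneg_right ?_ (hd j).le)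
      exact (Finset.le_sup' θ (Finset.mem_univ j)).trans (le_max_left _ _)
    have hTlt : T < sInf S :=
      max_lt ((Finset.sup'_lt_iff _).2 fun i _ => hθ i) hpos
    exact absurd (csInf_le hbdd hT) (not_le.2 hTlt)
  rw [hzero] at happ
  rw [tendsto_pi_nhds]
  intro j
  rw [Metric.tendsto_atTop']
  intro ε hε
  have h := (happ (ε / 2 / d j) (by have := hd j; positivity) j)
  obtain ⟨N, hN⟩ := eventually_atTop.1 h
  refine ⟨N, fun m hm => ?_⟩
  have := hN m hm.le
  rw [div_mul_cancel₀ _ (hd j).ne'] at this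
  rw [Real.dist_eq]
  simp only [Pi.zero_apply, sub_zero]
  linarith

open Filter Topology in
/-- One row of the system: if the weighted deviations from the equilibrium `e` are asymptotically
at most `L > 0`, then the `i`-th one is asymptotically at most some `θ < L`. The gap comes from
`exists_uniform_gap` on every term with a nonzero coefficient, and from `|α| < 1` in case all of
`b`, `c` vanish. -/
lemma row_improve {n P : ℕ} {d : Fin n → ℝ} (hd : ∀ i, 0 < d i) (i : Fin n)
    {α : ℝ} (hα : |α| < 1) (ν : ℕ) (τ : Fin n → Fin P → ℕ) (b : Fin n → Fin P → ℝ)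
    (c : Fin n → ℝ) {ζ : Fin n → ℕ → ℝ} (hζ : ∀ j, ∑' l, |ζ j l| = 1)
    {f : Fin n → Fin P → ℝ → ℝ} {g : Fin n → ℝ → ℝ} {F : Fin n → Fin P → ℝ} {G : Fin n → ℝ}
    (hf : ∀ j p, 0 < F j p ∧ ∀ u v : ℝ, u ≠ v → |f j p u - f j p v| < F j p * |u - v|)
    (hg : ∀ j, 0 < G j ∧ ∀ u v : ℝ, u ≠ v → |g j u - g j v| < G j * |u - v|)
    (hrow : |α| * d i + ∑ j, (|c j| * G j + ∑ p, |b j p| * F j p) * d j ≤ d i)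
    {x : ℤ → Fin n → ℝ} {e : Fin n → ℝ} {K : ℝ} (hK : ∀ m j, |x m j - e j| ≤ K * d j)
    (hineq : ∀ᶠ m : ℤ in atTop, |x (m + 1) i - e i| ≤ |α| * |x (m - ν) i - e i|
      + ∑ j, ∑ p, |b j p| * |f j p (x (m - τ j p) j) - f j p (e j)|
      + ∑ j, |c j| * ∑' l : ℕ, |ζ j l| * |g j (x (m - l) j) - g j (e j)|)
    {L : ℝ} (hL : 0 < L) (hbound : ∀ L' > L, ∀ j, ∀ᶠ m in atTop, |x m j - e j| ≤ L' * d j) :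
    ∃ θ < L, ∀ᶠ m in atTop, |x m i - e i| ≤ θ * d i := by
  have hshift : ∀ k : ℕ, Tendsto (fun m : ℤ => m - k) atTop atTop := fun k =>
    tendsto_atTop_add_const_right atTop (-(k : ℤ)) tendsto_id
  have hnear : ∀ j, ∀ δ > 0, ∀ᶠ m in atTop, |x m j - e j| ≤ L * d j + δ := fun j δ hδ => by
    have hdj := hd j
    filter_upwards [hbound (L + δ / d j) (by have : 0 < δ / d j := by positivity
                                             linarith) j] with m hm
    rwa [add_mul, div_mul_cancel₀ _ hdj.ne'] at hm
  choose δ hδ hδ' using fun j p =>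
    exists_uniform_gap (hf j p).1 (hf j p).2 (e j) (mul_pos hL (hd j))
  choose η hη hη' using fun j =>
    exists_uniform_gap (hg j).1 (hg j).2 (e j) (mul_pos hL (hd j))
  have hfev : ∀ j p, ∀ᶠ m : ℤ in atTop,
      |f j p (x (m - τ j p) j) - f j p (e j)| ≤ F j p * (L * d j) - δ j p := fun j p => by
    filter_upwards [(hshift (τ j p)).eventually (hnear j _ (hδ j p))] with m hm
    exact hδ' j p _ hm
  have hgev : ∀ j, ∀ᶠ m : ℤ in atTop,
      ∑' l : ℕ, |ζ j l| * |g j (x (m - l) j) - g j (e j)| ≤ G j * (L * d j) - η j / 2 :=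
    fun j => by
      have hC : ∀ m, |g j (x m j) - g j (e j)| ≤ G j * (K * d j) := fun m =>
        (abs_sub_le_of_strict (hg j).2 _ _).trans
          (mul_le_mul_of_nonneg_left (hK m j) (hg j).1.le)
      have hR : ∀ᶠ m in atTop, |g j (x m j) - g j (e j)| ≤ G j * (L * d j) - η j := by
        filter_upwards [hnear j _ (hη j)] with m hm
        exact hη' j _ hm
      filter_upwards [eventually_tsum_kernel_le (hζ j) hC hR (half_pos (hη j))] with m hm
      linarith
  set R : ℝ := ∑ j, ∑ p, |b j p| * (F j p * (L * d j) - δ j p)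
    + ∑ j, |c j| * (G j * (L * d j) - η j / 2) with hRdef
  set gap : ℝ := ∑ j, ∑ p, |b j p| * δ j p + ∑ j, |c j| * (η j / 2) with hgap
  have hRgap : R = L * ∑ j, (|c j| * G j + ∑ p, |b j p| * F j p) * d j - gap := by
    rw [hRdef, hgap]
    simp only [mul_sub, Finset.sum_sub_distrib, add_mul, Finset.sum_add_distrib, mul_add,
      Finset.mul_sum, Finset.sum_mul]
    have h1 : ∀ j p, |b j p| * (F j p * (L * d j)) = L * (|b j p| * F j p * d j) :=
      fun j p => by ring
    have h2 : ∀ j, |c j| * (G j * (L * d j)) = L * (|c j| * G j * d j) := fun j => by ring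
    simp only [h1, h2]
    ring
  have hR : R < L * ((1 - |α|) * d i) := by
    have hb0 : ∀ j p, 0 ≤ |b j p| * δ j p := fun j p =>
      mul_nonneg (abs_nonneg _) (hδ j p).le
    have hc0 : ∀ j, 0 ≤ |c j| * (η j / 2) := fun j =>
      mul_nonneg (abs_nonneg _) (half_pos (hη j)).le
    have hbs : 0 ≤ ∑ j, ∑ p, |b j p| * δ j p :=
      Finset.sum_nonneg fun j _ => Finset.sum_nonneg fun p _ => hb0 j p
    have hcs : 0 ≤ ∑ j, |c j| * (η j / 2) := Finset.sum_nonneg fun j _ => hc0 j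
    rcases (add_nonneg hbs hcs).lt_or_eq with hpos | hzero
    · have := mul_le_mul_of_nonneg_left hrow hL.le
      have hgap0 : 0 < gap := hpos
      rw [hRgap]
      linarith
    · have hbz : ∀ j p, |b j p| = 0 := fun j p => by
        have h1 : ∑ j, ∑ p, |b j p| * δ j p = 0 := by linarith
        have h2 := (Finset.sum_eq_zero_iff_of_nonneg
          (fun j _ => Finset.sum_nonneg fun p _ => hb0 j p)).1 h1 j (Finset.mem_univ j)
        have h3 := (Finset.sum_eq_zero_iff_of_nonneg
          (fun p _ => hb0 j p)).1 h2 p (Finset.mem_univ p)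
        exact (mul_eq_zero.1 h3).resolve_right (hδ j p).ne'
      have hcz : ∀ j, |c j| = 0 := fun j => by
        have h1 : ∑ j, |c j| * (η j / 2) = 0 := by linarith
        have h2 := (Finset.sum_eq_zero_iff_of_nonneg
          (fun j _ => hc0 j)).1 h1 j (Finset.mem_univ j)
        exact (mul_eq_zero.1 h2).resolve_right (half_pos (hη j)).ne'
      have hRz : R = 0 := by simp [hRdef, hbz, hcz]
      rw [hRz]
      have := hd i
      have : 0 < 1 - |α| := by linarith
      positivity
  set ε : ℝ := (L * ((1 - |α|) * d i) - R) / (2 * d i) with hε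
  have hdi := hd i
  have hε0 : 0 < ε := div_pos (by linarith) (by positivity)
  have hεd : ε * d i = (L * ((1 - |α|) * d i) - R) / 2 := by rw [hε]; field_simp
  refine ⟨(|α| * ((L + ε) * d i) + R) / d i, ?_, ?_⟩
  · rw [div_lt_iff₀ hdi]
    have : |α| * (ε * d i) ≤ 1 * (ε * d i) :=
      mul_le_mul_of_nonneg_right hα.le (by positivity)
    nlinarith
  · have hstep : ∀ᶠ m : ℤ in atTop,
        |x (m + 1) i - e i| ≤ (|α| * ((L + ε) * d i) + R) / d i * d i := by
      filter_upwards [hineq, (hshift ν).eventually (hbound (L + ε) (by linarith) i),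
        eventually_all.2 fun j => eventually_all.2 fun p => hfev j p,
        eventually_all.2 hgev] with m h1 h2 h3 h4
      rw [div_mul_cancel₀ _ hdi.ne']
      refine h1.trans ?_
      rw [hRdef, ← add_assoc]
      gcongr with j _ p _ j _
      · exact h3 j p
      · exact h4 j
    have hback : Tendsto (fun m : ℤ => m - 1) atTop atTop := by simpa using hshift 1
    filter_upwards [hback.eventually hstep] with m hm
    simpa using hm

/-- One step of the model, as an inequality between deviations from the equilibrium. -/
lemma row_ineq {n P : ℕ} (i : Fin n) {α J : ℝ} {τ : Fin n → Fin P → ℕ} {b : Fin n → Fin P → ℝ}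
    {c : Fin n → ℝ} {ζ : Fin n → ℕ → ℝ} (hζ : ∀ j, ∑' l, |ζ j l| = 1)
    {f : Fin n → Fin P → ℝ → ℝ} {g : Fin n → ℝ → ℝ} {x : ℤ → Fin n → ℝ} {e : Fin n → ℝ}
    {m : ℤ} {z w : ℝ} (hs : ∀ j, Summable fun l : ℕ => |ζ j l * g j (x (m - l) j)|)
    (hz : z = α * w + ∑ j, ∑ p, b j p * f j p (x (m - τ j p) j)
      + ∑ j, c j * ∑' l : ℕ, ζ j l * g j (x (m - l) j) + J)
    (he : e i = α * e i + ∑ j, ∑ p, b j p * f j p (e j)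
      + ∑ j, c j * ∑' l : ℕ, ζ j l * g j (e j) + J) :
    |z - e i| ≤ |α| * |w - e i|
      + ∑ j, ∑ p, |b j p| * |f j p (x (m - τ j p) j) - f j p (e j)|
      + ∑ j, |c j| * ∑' l : ℕ, |ζ j l| * |g j (x (m - l) j) - g j (e j)| := by
  have hs1 : ∀ j, Summable fun l : ℕ => ζ j l * g j (x (m - l) j) := fun j => (hs j).of_abs
  have hs2 : ∀ j, Summable fun l : ℕ => ζ j l * g j (e j) := fun j =>
    (summable_abs_of_tsum_eq_one (hζ j)).of_abs.mul_right _
  have hdiff : z - e i = α * (w - e i)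
      + ∑ j, ∑ p, b j p * (f j p (x (m - τ j p) j) - f j p (e j))
      + ∑ j, c j * ∑' l : ℕ, ζ j l * (g j (x (m - l) j) - g j (e j)) := by
    have h1 : ∀ j, ∑' l : ℕ, ζ j l * (g j (x (m - l) j) - g j (e j))
        = ∑' l : ℕ, ζ j l * g j (x (m - l) j) - ∑' l : ℕ, ζ j l * g j (e j) := fun j => by
      rw [← (hs1 j).tsum_sub (hs2 j)]
      simp only [mul_sub]
    simp only [h1]
    simp only [mul_sub, Finset.sum_sub_distrib]
    linarith
  have hker : ∀ j, |∑' l : ℕ, ζ j l * (g j (x (m - l) j) - g j (e j))|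
      ≤ ∑' l : ℕ, |ζ j l| * |g j (x (m - l) j) - g j (e j)| := fun j => by
    have hsum : Summable fun l : ℕ => ‖ζ j l * (g j (x (m - l) j) - g j (e j))‖ := by
      have := ((hs1 j).sub (hs2 j)).abs
      simpa only [mul_sub, Real.norm_eq_abs] using this
    simpa only [Real.norm_eq_abs, abs_mul] using norm_tsum_le_tsum_norm hsum
  rw [hdiff]
  refine (abs_add_three _ _ _).trans ?_
  rw [abs_mul]
  gcongr
  · refine (Finset.abs_sum_le_sum_abs _ _).trans (Finset.sum_le_sum fun j _ => ?_)
    refine (Finset.abs_sum_le_sum_abs _ _).trans (Finset.sum_le_sum fun p _ => ?_)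
    rw [abs_mul]
  · refine (Finset.abs_sum_le_sum_abs _ _).trans (Finset.sum_le_sum fun j _ => ?_)
    rw [abs_mul]
    exact mul_le_mul_of_nonneg_left (hker j) (abs_nonneg _)

/-! ### Attractivity of the equilibrium -/

/-- Corollary 3.2: for the autonomous model (2) with an equilibrium point `x*`,
Lipschitz-type activation functions (H6†), and `M` a singular irreducible M-matrix,
every solution with bounded initial condition converges to `x*`. -/
theorem autonomous_global_attractivity_equilibrium
    (n P : ℕ) (hn : 1 ≤ n) (hP : 1 ≤ P)
    (a : Fin n → ℝ) (ha : ∀ i, -1 < a i ∧ a i < 1)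
    (ν : Fin n → ℕ) (τ : Fin n → Fin n → Fin P → ℕ)
    (b : Fin n → Fin n → Fin P → ℝ) (c : Fin n → Fin n → ℝ)
    (I : Fin n → ℝ)
    (ζ : Fin n → Fin n → ℕ → ℝ)
    (f : Fin n → Fin n → Fin P → ℝ → ℝ)
    (g : Fin n → Fin n → ℝ → ℝ)
    (F : Fin n → Fin n → Fin P → ℝ)
    (G : Fin n → Fin n → ℝ)
    (σ : ℕ) (x : ℤ → Fin n → ℝ)
    -- `x` has bounded initial condition: it is bounded on `(-∞, σ] ∩ ℤ`
    (hinit : ∃ B : ℝ, ∀ m : ℤ, m ≤ (σ : ℤ) → ‖x m‖ ≤ B)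
    -- the inner series converge absolutely
    (habs : ∀ (i j : Fin n) (m : ℤ), Summable fun l : ℕ => |ζ i j l * g i j (x (m - l) j)|)
    -- `x` is a solution of the autonomous model (2) from the initial time `σ` on
    (hmodel : ∀ m : ℕ, σ ≤ m → ∀ i : Fin n,
      x ((m : ℤ) + 1) i =
        a i * x ((m : ℤ) - ν i) i
        + ∑ j, ∑ p, b i j p * f i j p (x ((m : ℤ) - τ i j p) j)
        + ∑ j, c i j * ∑' l : ℕ, ζ i j l * g i j (x ((m : ℤ) - l) j)
        + I i)
    -- (H4): the kernels satisfy `∑ l, |ζ i j l| = 1`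
    (hH4 : ∀ i j, ∑' l : ℕ, |ζ i j l| = 1)
    -- equilibrium point
    (xstar : Fin n → ℝ)
    (heq : ∀ i, xstar i =
      a i * xstar i
      + ∑ j, ∑ p, b i j p * f i j p (xstar j)
      + ∑ j, c i j * ∑' l : ℕ, ζ i j l * g i j (xstar j)
      + I i)
    -- (H6†)
    (hH6f : ∀ i j p, 0 < F i j p ∧
      ∀ u v : ℝ, u ≠ v → |f i j p u - f i j p v| < F i j p * |u - v|)
    (hH6g : ∀ i j, 0 < G i j ∧
      ∀ u v : ℝ, u ≠ v → |g i j u - g i j v| < G i j * |u - v|)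
    -- the matrix `M` is a singular irreducible M-matrix
    (hM : IsMMatrix (Matrix.of fun i j : Fin n =>
        (if i = j then 1 - |a i| else 0)
        - (|c i j| * G i j + ∑ p, |b i j p| * F i j p)))
    (hMsing : ((Matrix.of fun i j : Fin n =>
        (if i = j then 1 - |a i| else 0)
        - (|c i j| * G i j + ∑ p, |b i j p| * F i j p))).det = 0)
    (hMirr : ¬ IsReducible (Matrix.of fun i j : Fin n =>
        (if i = j then 1 - |a i| else 0)
        - (|c i j| * G i j + ∑ p, |b i j p| * F i j p))) :
    Filter.Tendsto (fun m : ℤ => ‖x m - xstar‖) Filter.atTop (nhds 0) := by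
  set A : Matrix (Fin n) (Fin n) ℝ := Matrix.of fun i j : Fin n =>
    (if i = j then 1 - |a i| else 0)
      - (|c i j| * G i j + ∑ p, |b i j p| * F i j p) with hAdef
  obtain ⟨d, hd, hAd⟩ := hM.exists_pos_mulVec_nonneg hn hMirr
  have hrow : ∀ i, |a i| * d i
      + ∑ j, (|c i j| * G i j + ∑ p, |b i j p| * F i j p) * d j ≤ d i := by
    intro i
    have h := hAd i
    simp only [Matrix.mulVec, dotProduct, hAdef, Matrix.of_apply, sub_mul,
      Finset.sum_sub_distrib, ite_mul, zero_mul, Finset.sum_ite_eq, Finset.mem_univ,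
      if_true] at h
    linarith
  have hineq : ∀ m : ℤ, (σ : ℤ) ≤ m → ∀ i, |x (m + 1) i - xstar i|
      ≤ |a i| * |x (m - ν i) i - xstar i|
      + ∑ j, ∑ p, |b i j p| * |f i j p (x (m - τ i j p) j) - f i j p (xstar j)|
      + ∑ j, |c i j| * ∑' l : ℕ, |ζ i j l| * |g i j (x (m - l) j) - g i j (xstar j)| := by
    intro m hm i
    lift m to ℕ using by omega
    exact row_ineq i (hH4 i) (fun j => habs i j m) (hmodel m (by exact_mod_cast hm) i) (heq i)
  -- Since `A d ≥ 0`, the weighted max norm of the deviation never exceeds its initial supremum.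
  obtain ⟨K, hK⟩ : ∃ K : ℝ, ∀ m j, |x m j - xstar j| ≤ K * d j := by
    obtain ⟨B, hB⟩ := hinit
    have hB0 : 0 ≤ B := (norm_nonneg _).trans (hB σ le_rfl)
    set K : ℝ := (B + ‖xstar‖) * ∑ j, (d j)⁻¹ with hKdef
    have hK0 : 0 ≤ K := mul_nonneg (by positivity)
      (Finset.sum_nonneg fun j _ => (inv_pos.2 (hd j)).le)
    have hinit' : ∀ m : ℤ, m ≤ σ → ∀ j, |x m j - xstar j| ≤ K * d j := by
      intro m hm j
      have h1 : |x m j - xstar j| ≤ B + ‖xstar‖ :=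
        (norm_le_pi_norm (x m - xstar) j).trans
          ((norm_sub_le _ _).trans (add_le_add_left (hB m hm) _))
      have h2 : (d j)⁻¹ ≤ ∑ j, (d j)⁻¹ :=
        Finset.single_le_sum (f := fun j => (d j)⁻¹) (fun j _ => (inv_pos.2 (hd j)).le)
          (Finset.mem_univ j)
      calc |x m j - xstar j| ≤ (B + ‖xstar‖) * (d j)⁻¹ * d j := by
            rwa [inv_mul_cancel_right₀ (hd j).ne']
        _ ≤ K * d j := by
            rw [hKdef]
            have := (hd j).le
            gcongr
    have hind : ∀ k : ℕ, ∀ m : ℤ, m ≤ σ + k → ∀ j, |x m j - xstar j| ≤ K * d j := by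
      intro k
      induction k with
      | zero => simpa using hinit'
      | succ k ih =>
        intro m hm i
        rcases hm.lt_or_eq with hlt | rfl
        · exact ih m (by push_cast at hlt; omega) i
        · have hstep := hineq (σ + k) (by omega) i
          have hpast : ∀ (l : ℕ) j, |x ((σ : ℤ) + k - l) j - xstar j| ≤ K * d j :=
            fun l j => ih _ (by omega) j
          have heq1 : (σ : ℤ) + ((k + 1 : ℕ) : ℤ) = σ + k + 1 := by push_cast; ring
          rw [heq1]
          have hfb : ∀ j p, |f i j p (x ((σ : ℤ) + k - τ i j p) j) - f i j p (xstar j)|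
              ≤ F i j p * (K * d j) := fun j p =>
            (abs_sub_le_of_strict (hH6f i j p).2 _ _).trans
              (mul_le_mul_of_nonneg_left (hpast _ j) (hH6f i j p).1.le)
          have hgb : ∀ j, ∑' l : ℕ,
              |ζ i j l| * |g i j (x ((σ : ℤ) + k - l) j) - g i j (xstar j)|
              ≤ G i j * (K * d j) := fun j =>
            tsum_kernel_le (hH4 i j) fun l =>
              (abs_sub_le_of_strict (hH6g i j).2 _ _).trans
                (mul_le_mul_of_nonneg_left (hpast l j) (hH6g i j).1.le)
          calc _ ≤ _ := hstep
            _ ≤ |a i| * (K * d i) + ∑ j, ∑ p, |b i j p| * (F i j p * (K * d j))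
                + ∑ j, |c i j| * (G i j * (K * d j)) := by
              gcongr with j _ p _ j _
              · exact hpast _ i
              · exact hfb j p
              · exact hgb j
            _ = K * (|a i| * d i
                + ∑ j, (|c i j| * G i j + ∑ p, |b i j p| * F i j p) * d j) := by
              simp only [add_mul, Finset.sum_add_distrib, mul_add, Finset.mul_sum,
                Finset.sum_mul]
              have h1 : ∀ j p, |b i j p| * (F i j p * (K * d j))
                  = K * (|b i j p| * F i j p * d j) := fun j p => by ring
              have h2 : ∀ j, |c i j| * (G i j * (K * d j))
                  = K * (|c i j| * G i j * d j) := fun j => by ring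
              simp only [h1, h2]
              ring
            _ ≤ K * d i := mul_le_mul_of_nonneg_left (hrow i) hK0
    exact ⟨K, fun m j => hind (m - σ).toNat m (by omega) j⟩
  have hlim : Filter.Tendsto (fun m : ℤ => x m - xstar) Filter.atTop (nhds 0) := by
    refine tendsto_zero_of_improve hn hd hK fun L hL hbound i => ?_
    exact row_improve hd i (abs_lt.2 (ha i)) (ν i) (τ i) (b i) (c i) (hH4 i) (hH6f i) (hH6g i)
      (hrow i) hK (Filter.eventually_atTop.2 ⟨σ, fun m hm => hineq m hm i⟩) hL hbound
  simpa using hlim.norm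
end

section
/- Assume hypotheses (H1)–(H5) and (H6). Then every solution x : ℤ → ℝⁿ of model (1) with initial time σ ∈ ℕ and bounded initial condition satisfies, for every i ∈ {1,…,n}, limsup_{m→∞} |x_i(m)| ≤ (1/(1−â_i)) ∑_{j=1}^n ( ∑_{p=1}^P b̂_{ijp} F_{ijp} + ĉ_{ij} G_{ij} ). (Estimate (3.10) in the proof of Lemma 3.2, item i.) -/
/-!
By continuity, the growth conditions on the activation functions make them globally bounded:
`|f i j p u| ≤ F i j p` and `|g i j u| ≤ G i j` for all `u`. Hence each coordinate `y = |xᵢ|`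
satisfies a scalar delay inequality `y (m + 1) ≤ α m * y (m - ν m) + β m` with `α = |aᵢ|` and
`β m = ∑ⱼ (∑ₚ |bᵢⱼₚ m| Fᵢⱼₚ + |cᵢⱼ m| Gᵢⱼ) + |Iᵢ m|`.

Since `sup α < 1` and `β` is bounded, `y` is bounded (`bounded_of_delay_ineq`). Its limsup `L` is
therefore a genuine one, and taking the limsup in the inequality, where the delayed argument tends
to infinity, gives `L ≤ limsup α * L + S` for every asymptotic upper bound `S` of `β`
(`limsup_le_of_delay_ineq`). As `limsup α < 1`, this can be solved for `L`.
-/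

open Filter

/-- `S` is an asymptotic upper bound of the sequence `u`: for every `ε > 0`, eventually
`u m ≤ S + ε`. This says `limsup u ≤ S` in the extended reals, so no junk value of the real-valued
`Filter.limsup` can intervene. -/
def AsympLe (u : ℕ → ℝ) (S : ℝ) : Prop :=
  ∀ ε > 0, ∀ᶠ m in atTop, u m ≤ S + ε

lemma AsympLe.add {u v : ℕ → ℝ} {S T : ℝ} (hu : AsympLe u S) (hv : AsympLe v T) :
    AsympLe (fun m => u m + v m) (S + T) := by
  intro ε hε
  filter_upwards [hu (ε / 2) (by positivity), hv (ε / 2) (by positivity)] with m h1 h2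
  linarith

lemma AsympLe.sum {ι : Type*} (s : Finset ι) {u : ι → ℕ → ℝ} {S : ι → ℝ}
    (h : ∀ i, AsympLe (u i) (S i)) : AsympLe (fun m => ∑ i ∈ s, u i m) (∑ i ∈ s, S i) := by
  classical
  induction s using Finset.induction_on with
  | empty =>
    intro ε hε
    exact Eventually.of_forall fun _ => by simpa using hε.le
  | insert i s hi ih =>
    simp only [Finset.sum_insert hi]
    exact (h i).add ih

lemma AsympLe.mul_const {u : ℕ → ℝ} {S K : ℝ} (hu : AsympLe u S) (hK : 0 < K) :
    AsympLe (fun m => u m * K) (S * K) := by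
  intro ε hε
  filter_upwards [hu (ε / K) (by positivity)] with m hm
  calc u m * K ≤ (S + ε / K) * K := by gcongr
    _ = S * K + ε := by field_simp

lemma asympLe_limsup {u : ℕ → ℝ} (hu : BddAbove (Set.range u)) :
    AsympLe u (limsup u atTop) := by
  intro ε hε
  filter_upwards [eventually_lt_of_limsup_lt (lt_add_of_pos_right (limsup u atTop) hε)
    hu.isBoundedUnder_of_range] with m hm
  exact hm.le

lemma asympLe_of_tendsto {u : ℕ → ℝ} {S : ℝ} (hu : Tendsto u atTop (nhds S)) :
    AsympLe u S := fun _ hε =>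
  (hu.eventually (gt_mem_nhds (lt_add_of_pos_right S hε))).mono fun _ h => h.le

lemma AsympLe.bddAbove {u : ℕ → ℝ} {S : ℝ} (hu : AsympLe u S) : BddAbove (Set.range u) :=
  IsBoundedUnder.bddAbove_range ⟨S + 1, by simpa using hu 1 one_pos⟩

/-- The conditions on an activation function `h` bound it globally; at `0` this uses continuity,
which forces `h 0 = 0`. -/
lemma activation_le {h : ℝ → ℝ} {H : ℝ} (hc : Continuous h) (hH : 0 < H)
    (h1 : ∀ u : ℝ, 1 < |u| → |h u| ≤ H)
    (h2 : ∀ u : ℝ, u ≠ 0 → |u| ≤ 1 → |h u| < H * |u|) (u : ℝ) : |h u| ≤ H := by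
  have key : ∀ u : ℝ, u ≠ 0 → |h u| ≤ H := by
    intro u hu
    rcases lt_or_ge 1 |u| with h' | h'
    · exact h1 u h'
    · exact (h2 u hu h').le.trans (mul_le_of_le_one_right hH.le h')
  by_cases hu : u = 0
  · subst hu
    have ht : Tendsto (fun u => |h u|) (nhdsWithin 0 {0}ᶜ) (nhds |h 0|) :=
      (hc.abs.tendsto 0).mono_left nhdsWithin_le_nhds
    exact le_of_tendsto ht (eventually_mem_nhdsWithin.mono fun u hu => key u hu)
  · exact key u hu

/-- Boundedness of solutions of the scalar delay inequality, by induction on time; the argument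
`m - ν m` may be negative, where the initial bound applies. -/
lemma bounded_of_delay_ineq {y : ℤ → ℝ} {α β : ℕ → ℝ} {ν : ℕ → ℕ} {σ : ℕ} {A B K : ℝ}
    (hα0 : ∀ m, 0 ≤ α m) (hαA : ∀ m, α m ≤ A) (hA : A < 1)
    (hβ : ∀ m, β m ≤ K) (hB : ∀ m : ℤ, m ≤ σ → y m ≤ B)
    (hy : ∀ m : ℕ, σ ≤ m → y ((m : ℤ) + 1) ≤ α m * y ((m : ℤ) - ν m) + β m) :
    ∃ M, ∀ m, y m ≤ M := by
  have hA' : 0 < 1 - A := by linarith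
  -- `M ≥ K / (1 - A)` makes the bound `M` reproduce itself: `A * M + K ≤ M`.
  obtain ⟨M, hM0, hMB, hMK⟩ : ∃ M : ℝ, 0 ≤ M ∧ B ≤ M ∧ K / (1 - A) ≤ M :=
    ⟨max 0 (max B (K / (1 - A))), le_max_left _ _, (le_max_left _ _).trans (le_max_right _ _),
      (le_max_right _ _).trans (le_max_right _ _)⟩
  rw [div_le_iff₀ hA'] at hMK
  have step : ∀ k : ℕ, ∀ m : ℤ, m ≤ σ + k → y m ≤ M := by
    intro k
    induction k with
    | zero => exact fun m hm => (hB m (by simpa using hm)).trans hMB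
    | succ k ih =>
      intro m hm
      rcases eq_or_lt_of_le hm with h | h
      · have h1 := hy (σ + k) (by omega)
        have h2 := ih (((σ + k : ℕ) : ℤ) - ν (σ + k)) (by push_cast; omega)
        have h3 : m = ((σ + k : ℕ) : ℤ) + 1 := by rw [h]; push_cast; ring
        rw [h3]
        have h4 := mul_le_mul_of_nonneg_left h2 (hα0 (σ + k))
        have h5 := mul_le_mul_of_nonneg_right (hαA (σ + k)) hM0
        have h6 := hβ (σ + k)
        linarith
      · exact ih m (by push_cast at h; omega)
  refine ⟨M, fun m => step (m - σ).toNat m ?_⟩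
  have := Int.self_le_toNat (m - σ)
  omega

/-- The limsup of a solution of the scalar delay inequality: passing to the limit gives
`L ≤ limsup α * L + S`, which is solved for `L`. -/
lemma limsup_le_of_delay_ineq {y : ℤ → ℝ} {α β : ℕ → ℝ} {ν : ℕ → ℕ} {σ : ℕ} {A B S : ℝ}
    (hy0 : ∀ m, 0 ≤ y m) (hα0 : ∀ m, 0 ≤ α m) (hαA : ∀ m, α m ≤ A) (hA : A < 1)
    (hβ : AsympLe β S) (hB : ∀ m : ℤ, m ≤ σ → y m ≤ B)
    (hν : Tendsto (fun m : ℕ => (m : ℤ) - ν m) atTop atTop)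
    (hy : ∀ m : ℕ, σ ≤ m → y ((m : ℤ) + 1) ≤ α m * y ((m : ℤ) - ν m) + β m) :
    limsup y atTop ≤ (1 / (1 - limsup α atTop)) * S := by
  obtain ⟨K, hK⟩ := hβ.bddAbove
  obtain ⟨M, hM⟩ := bounded_of_delay_ineq hα0 hαA hA (fun m => hK ⟨m, rfl⟩) hB hy
  have hαb : BddAbove (Set.range α) := ⟨A, by rintro _ ⟨m, rfl⟩; exact hαA m⟩
  have hyb : IsBoundedUnder (· ≤ ·) atTop y := isBoundedUnder_of ⟨M, hM⟩
  have hyc : IsCoboundedUnder (· ≤ ·) atTop y :=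
    (isBoundedUnder_of ⟨0, hy0⟩ : IsBoundedUnder (· ≥ ·) atTop y).isCoboundedUnder_le
  have hαc : IsCoboundedUnder (· ≤ ·) atTop α :=
    (isBoundedUnder_of ⟨0, hα0⟩ : IsBoundedUnder (· ≥ ·) atTop α).isCoboundedUnder_le
  have hα1 : limsup α atTop < 1 :=
    (limsup_le_of_le hαc (Eventually.of_forall hαA)).trans_lt hA
  set L := limsup y atTop with hL
  set l := limsup α atTop with hl
  have key : ∀ ε > 0, L ≤ (l + ε) * (L + ε) + (S + ε) := by
    intro ε hε
    have e1 : ∀ᶠ k : ℤ in atTop, y k < L + ε :=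
      eventually_lt_of_limsup_lt (lt_add_of_pos_right L hε) hyb
    obtain ⟨N, hN⟩ := eventually_atTop.1 ((asympLe_limsup hαb ε hε).and
      ((hβ ε hε).and ((hν.eventually e1).and (eventually_ge_atTop σ))))
    refine limsup_le_of_le hyc ?_
    filter_upwards [eventually_ge_atTop ((N : ℤ) + 1)] with k hk
    obtain ⟨m, rfl⟩ : ∃ m : ℕ, k = (m : ℤ) + 1 := ⟨(k - 1).toNat, by omega⟩
    obtain ⟨h1, h2, h3, h4⟩ := hN m (by omega)
    calc y ((m : ℤ) + 1) ≤ α m * y ((m : ℤ) - ν m) + β m := hy m h4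
      _ ≤ (l + ε) * (L + ε) + (S + ε) :=
        add_le_add (mul_le_mul h1 h3.le (hy0 _) ((hα0 m).trans h1)) h2
  have hlim : L ≤ l * L + S := by
    have hc : Continuous fun ε : ℝ => (l + ε) * (L + ε) + (S + ε) := by fun_prop
    have ht := (hc.tendsto 0).mono_left (nhdsWithin_le_nhds (s := Set.Ioi 0))
    simp only [add_zero] at ht
    exact ge_of_tendsto ht (eventually_mem_nhdsWithin.mono fun ε hε => key ε hε)
  rw [one_div, inv_mul_eq_div, le_div_iff₀ (by linarith)]
  linarith

/-- A kernel of total mass `1` keeps the bound `H` of the sequence it averages. Summability of the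
kernel need not be assumed, as a non-summable kernel would have `tsum` equal to `0`. -/
lemma abs_tsum_kernel_le {z h : ℕ → ℝ} {H : ℝ} (hz : ∑' l, |z l| = 1) (hh : ∀ l, |h l| ≤ H) :
    |∑' l, z l * h l| ≤ H := by
  have hs : Summable fun l => |z l| := by
    by_contra hns
    rw [tsum_eq_zero_of_not_summable hns] at hz
    exact zero_ne_one hz
  have := tsum_of_norm_bounded (f := fun l => z l * h l) (hs.hasSum.mul_right H) fun l => by
    rw [Real.norm_eq_abs, abs_mul]
    exact mul_le_mul_of_nonneg_left (hh l) (abs_nonneg _)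
  simpa [hz] using this


/-- Estimate (3.10) in the proof of Lemma 3.2, item i: under (H1)-(H5) and (H6),
every solution of model (1) with bounded initial condition satisfies
`limsup |xᵢ(m)| ≤ (1/(1-âᵢ)) ∑ⱼ (∑ₚ b̂ᵢⱼₚ Fᵢⱼₚ + ĉᵢⱼ Gᵢⱼ)`. -/
theorem limsup_first_estimate
    (n P : ℕ) (hn : 1 ≤ n) (hP : 1 ≤ P)
    (a : Fin n → ℕ → ℝ) (ν : Fin n → ℕ → ℕ)
    (b : Fin n → Fin n → Fin P → ℕ → ℝ)
    (τ : Fin n → Fin n → Fin P → ℕ → ℕ)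
    (c : Fin n → Fin n → ℕ → ℝ)
    (ζ : Fin n → Fin n → ℕ → ℝ)
    (I : Fin n → ℕ → ℝ)
    (f : Fin n → Fin n → Fin P → ℝ → ℝ)
    (g : Fin n → Fin n → ℝ → ℝ)
    (F : Fin n → Fin n → Fin P → ℝ)
    (G : Fin n → Fin n → ℝ)
    (σ : ℕ) (x : ℤ → Fin n → ℝ)
    -- `x` has bounded initial condition: it is bounded on `(-∞, σ] ∩ ℤ`
    (hinit : ∃ B : ℝ, ∀ m : ℤ, m ≤ (σ : ℤ) → ‖x m‖ ≤ B)
    -- the inner series converge absolutely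
    (habs : ∀ (i j : Fin n) (m : ℤ), Summable fun l : ℕ => |ζ i j l * g i j (x (m - l) j)|)
    -- `x` is a solution of model (1) from the initial time `σ` on
    (hmodel : ∀ m : ℕ, σ ≤ m → ∀ i : Fin n,
      x ((m : ℤ) + 1) i =
        a i m * x ((m : ℤ) - ν i m) i
        + ∑ j, ∑ p, b i j p m * f i j p (x ((m : ℤ) - τ i j p m) j)
        + ∑ j, c i j m * ∑' l : ℕ, ζ i j l * g i j (x ((m : ℤ) - l) j)
        + I i m)
    -- (H1)
    (hH1 : ∀ i, BddAbove (Set.range fun m : ℕ => |a i m|) ∧ (⨆ m : ℕ, |a i m|) < 1)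
    -- (H2)
    (hH2ν : ∀ i, Filter.Tendsto (fun m : ℕ => (m : ℤ) - ν i m) Filter.atTop Filter.atTop)
    (hH2τ : ∀ i j p,
      Filter.Tendsto (fun m : ℕ => (m : ℤ) - τ i j p m) Filter.atTop Filter.atTop)
    -- (H3)
    (hH3b : ∀ i j p, BddAbove (Set.range fun m : ℕ => |b i j p m|))
    (hH3c : ∀ i j, BddAbove (Set.range fun m : ℕ => |c i j m|))
    -- (H4)
    (hH4 : ∀ i j, ∑' l : ℕ, |ζ i j l| = 1)
    -- (H5)
    (hH5 : ∀ i, Summable fun m : ℕ => |I i m|)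
    -- (H6)
    (hH6f : ∀ i j p, Continuous (f i j p) ∧ 0 < F i j p ∧
      (∀ u : ℝ, 1 < |u| → |f i j p u| ≤ F i j p) ∧
      (∀ u : ℝ, u ≠ 0 → |u| ≤ 1 → |f i j p u| < F i j p * |u|))
    (hH6g : ∀ i j, Continuous (g i j) ∧ 0 < G i j ∧
      (∀ u : ℝ, 1 < |u| → |g i j u| ≤ G i j) ∧
      (∀ u : ℝ, u ≠ 0 → |u| ≤ 1 → |g i j u| < G i j * |u|))
    :
    ∀ i, Filter.limsup (fun m : ℤ => |x m i|) Filter.atTop ≤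
      (1 / (1 - Filter.limsup (fun m : ℕ => |a i m|) Filter.atTop)) *
        ∑ j, (∑ p, Filter.limsup (fun m : ℕ => |b i j p m|) Filter.atTop * F i j p
          + Filter.limsup (fun m : ℕ => |c i j m|) Filter.atTop * G i j) := by
  intro i
  obtain ⟨B, hB⟩ := hinit
  have hf : ∀ j p u, |f i j p u| ≤ F i j p := fun j p =>
    activation_le (hH6f i j p).1 (hH6f i j p).2.1 (hH6f i j p).2.2.1 (hH6f i j p).2.2.2
  have hg : ∀ j u, |g i j u| ≤ G i j := fun j =>
    activation_le (hH6g i j).1 (hH6g i j).2.1 (hH6g i j).2.2.1 (hH6g i j).2.2.2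
  have hβ : AsympLe
      (fun m => ∑ j, (∑ p, |b i j p m| * F i j p + |c i j m| * G i j) + |I i m|)
      (∑ j, (∑ p, limsup (fun m : ℕ => |b i j p m|) atTop * F i j p
          + limsup (fun m : ℕ => |c i j m|) atTop * G i j) + 0) :=
    (AsympLe.sum _ fun j =>
      (AsympLe.sum _ fun p => (asympLe_limsup (hH3b i j p)).mul_const (hH6f i j p).2.1).add
        ((asympLe_limsup (hH3c i j)).mul_const (hH6g i j).2.1)).add
      (asympLe_of_tendsto (hH5 i).tendsto_atTop_zero)
  rw [add_zero] at hβ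
  refine limsup_le_of_delay_ineq (y := fun m : ℤ => |x m i|) (α := fun m => |a i m|) (σ := σ)
    (B := B) (fun _ => abs_nonneg _) (fun _ => abs_nonneg _)
    (fun m => le_ciSup (hH1 i).1 m) (hH1 i).2 hβ
    (fun m hm => (norm_le_pi_norm (x m) i).trans (hB m hm)) (hH2ν i) ?_
  intro m hm
  simp only [hmodel m hm i, Finset.sum_add_distrib]
  have hb : |∑ j, ∑ p, b i j p m * f i j p (x ((m : ℤ) - τ i j p m) j)|
      ≤ ∑ j, ∑ p, |b i j p m| * F i j p := by
    refine (Finset.abs_sum_le_sum_abs _ _).trans (Finset.sum_le_sum fun j _ => ?_)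
    refine (Finset.abs_sum_le_sum_abs _ _).trans (Finset.sum_le_sum fun p _ => ?_)
    rw [abs_mul]
    exact mul_le_mul_of_nonneg_left (hf j p _) (abs_nonneg _)
  have hc : |∑ j, c i j m * ∑' l : ℕ, ζ i j l * g i j (x ((m : ℤ) - l) j)|
      ≤ ∑ j, |c i j m| * G i j := by
    refine (Finset.abs_sum_le_sum_abs _ _).trans (Finset.sum_le_sum fun j _ => ?_)
    rw [abs_mul]
    exact mul_le_mul_of_nonneg_left (abs_tsum_kernel_le (hH4 i j) fun l => hg j _)
      (abs_nonneg _)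
  refine (abs_add_le _ _).trans ?_
  rw [← add_assoc, ← add_assoc]
  refine add_le_add ?_ le_rfl
  refine (abs_add_le _ _).trans (add_le_add ((abs_add_le _ _).trans ?_) hc)
  rw [abs_mul]
  exact add_le_add le_rfl hb
end
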